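/- arXiv:2505.06933 — 9 statements merged into one kernel-verified Lean document; each statement's English description precedes it below -/
import Mathlib

section
/- Let E be a real Banach space, let 0 = t₀ < t₁ < ⋯ < t_N = T be a partition of [0,T], and let v : ℝ → E be continuous on [0,T]. For n = 1,…,N set t̄ₙ := (t_{n−1} + tₙ)/2 and let qₙ : ℝ → E be the quadratic Lagrange interpolant of v at the nodes t_{n−1}, t̄ₙ, tₙ, i.e. qₙ(t) = ℓₙ₀(t) • v(t_{n−1}) + ℓₙ₁(t) • v(t̄ₙ) + ℓₙ₂(t) • v(tₙ) where ℓₙ₀, ℓₙ₁, ℓₙ₂ are the scalar quadratic Lagrange basis polynomials for these three nodes. Define R : [0,T] → E by R(0) := v(0) and R(t) := v(t_{n−1}) + (t − t_{n−1}) • (deriv qₙ)(t̄ₙ) for t ∈ (t_{n−1}, tₙ]. Then R is continuous on [0,T] and R(tₙ) = v(tₙ) for every n = 0,…,N. -/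
/-!
The derivative of a quadratic at the midpoint of an interval equals its difference quotient over
that interval, so the derivative of the Lagrange interpolant at `t̄ₙ` is
`(tₙ - t_{n-1})⁻¹ • (v tₙ - v t_{n-1})` (`hasDerivAt_lagrange_midpoint`). Hence `R` is the piecewise
linear interpolant of `v`: its affine piece on `(t_{n-1}, tₙ]` takes the value `v tₙ` at `tₙ`, which is
also the starting value of the next piece. So `R` is affine on each closed subinterval, and
continuity follows by gluing these finitely many closed pieces together.
-/

open Set

/-- The derivative at the midpoint `m` of `[a, b]` of the quadratic through `(a, x)`, `(m, y)`,
`(b, z)` is the difference quotient over `[a, b]`; the middle value `y` drops out. -/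
theorem hasDerivAt_lagrange_midpoint {E : Type*} [NormedAddCommGroup E] [NormedSpace ℝ E]
    {a b m : ℝ} (hab : a < b) (hm : m = (a + b) / 2) (x y z : E) :
    HasDerivAt (fun s : ℝ =>
        (((s - m) * (s - b)) / ((a - m) * (a - b))) • x
        + (((s - a) * (s - b)) / ((m - a) * (m - b))) • y
        + (((s - a) * (s - m)) / ((b - a) * (b - m))) • z)
      ((b - a)⁻¹ • (z - x)) m := by
  have quad (c d k : ℝ) :
      HasDerivAt (fun s : ℝ => ((s - c) * (s - d)) / k) (((m - d) + (m - c)) / k) m := by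
    simpa using (((hasDerivAt_id m).sub_const c).mul ((hasDerivAt_id m).sub_const d)).div_const k
  have h := (((quad m b ((a - m) * (a - b))).smul_const x).add
    ((quad a b ((m - a) * (m - b))).smul_const y)).add
    ((quad a m ((b - a) * (b - m))).smul_const z)
  refine h.congr_deriv ?_
  have hba : b - a ≠ 0 := sub_ne_zero.2 hab.ne'
  have e1 : ((m - b) + (m - m)) / ((a - m) * (a - b)) = -(b - a)⁻¹ := by
    have h1 : a - m = -((b - a) / 2) := by rw [hm]; ring
    have h2 : a - b = -(b - a) := by ring
    have h3 : (m - b) + (m - m) = -((b - a) / 2) := by rw [hm]; ring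
    rw [h1, h2, h3]
    field_simp
  have e2 : ((m - b) + (m - a)) / ((m - a) * (m - b)) = 0 := by
    have h1 : (m - b) + (m - a) = 0 := by rw [hm]; ring
    rw [h1, zero_div]
  have e3 : ((m - m) + (m - a)) / ((b - a) * (b - m)) = (b - a)⁻¹ := by
    have h1 : b - m = (b - a) / 2 := by rw [hm]; ring
    have h3 : (m - m) + (m - a) = (b - a) / 2 := by rw [hm]; ring
    rw [h1, h3]
    field_simp
  rw [e1, e2, e3, zero_smul, add_zero, neg_smul, smul_sub]
  abel

/-- The interpolant `R¹_τ v`, defined on each subinterval `(t_{n-1}, t_n]` as the affine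
function matching `v` at the left endpoint and whose constant derivative is the derivative
at the midpoint of the quadratic Lagrange interpolant of `v` at `t_{n-1}, t̄_n, t_n`, is
globally continuous on `[0, T]` and reproduces `v` at all mesh points. -/
theorem interpolant_R_continuous_and_nodal_exactness
    {E : Type*} [NormedAddCommGroup E] [NormedSpace ℝ E] [CompleteSpace E]
    (N : ℕ) (hN : 1 ≤ N) (t : ℕ → ℝ) (ht0 : t 0 = 0)
    (hmono : ∀ i, i < N → t i < t (i + 1))
    (v : ℝ → E) (hv : ContinuousOn v (Set.Icc 0 (t N)))
    (tb : ℕ → ℝ) (htb : ∀ n : ℕ, tb n = (t (n - 1) + t n) / 2)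
    (q : ℕ → ℝ → E)
    (hq : ∀ n : ℕ, 1 ≤ n → n ≤ N → ∀ s : ℝ,
      q n s =
        (((s - tb n) * (s - t n)) / ((t (n - 1) - tb n) * (t (n - 1) - t n))) • v (t (n - 1))
        + (((s - t (n - 1)) * (s - t n)) / ((tb n - t (n - 1)) * (tb n - t n))) • v (tb n)
        + (((s - t (n - 1)) * (s - tb n)) / ((t n - t (n - 1)) * (t n - tb n))) • v (t n))
    (R : ℝ → E) (hR0 : R 0 = v 0)
    (hR : ∀ n : ℕ, 1 ≤ n → n ≤ N → ∀ s ∈ Set.Ioc (t (n - 1)) (t n),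
      R s = v (t (n - 1)) + (s - t (n - 1)) • deriv (q n) (tb n)) :
    ContinuousOn R (Set.Icc 0 (t N)) ∧ ∀ n : ℕ, n ≤ N → R (t n) = v (t n) := by
  have hder : ∀ n, n < N → deriv (q (n + 1)) (tb (n + 1)) =
      (t (n + 1) - t n)⁻¹ • (v (t (n + 1)) - v (t n)) := by
    intro n hn
    rw [funext (hq (n + 1) (by omega) hn)]
    exact (hasDerivAt_lagrange_midpoint (hmono n hn) (htb (n + 1)) _ _ _).deriv
  have hnode : ∀ n, n ≤ N → R (t n) = v (t n) := by
    rintro (_ | n) hn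
    · rw [ht0, hR0]
    · have hlt := hmono n hn
      rw [hR (n + 1) (by omega) hn _ ⟨hlt, le_rfl⟩, hder n hn, Nat.add_sub_cancel,
        smul_inv_smul₀ (sub_ne_zero.2 hlt.ne'), add_sub_cancel]
  have hpiece : ∀ n, n < N → ContinuousOn R (Set.Icc (t n) (t (n + 1))) := by
    intro n hn
    have haff : ContinuousOn
        (fun s => v (t n) + (s - t n) • deriv (q (n + 1)) (tb (n + 1)))
        (Set.Icc (t n) (t (n + 1))) := by fun_prop
    refine haff.congr fun s hs => ?_
    -- The left endpoint belongs to the previous piece, where nodal exactness gives the value.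
    rcases hs.1.eq_or_lt with rfl | hlt
    · simpa using hnode n hn.le
    · exact hR (n + 1) (by omega) hn s ⟨hlt, hs.2⟩
  have hglue : ∀ n, n ≤ N → 0 ≤ t n ∧ ContinuousOn R (Set.Icc 0 (t n)) := by
    intro n
    induction n with
    | zero => intro _; simp [ht0]
    | succ n ih =>
      intro hn
      obtain ⟨h0, hc⟩ := ih (by omega)
      have hlt := hmono n hn
      refine ⟨h0.trans hlt.le, ?_⟩
      rw [← Set.Icc_union_Icc_eq_Icc h0 hlt.le]
      exact hc.union_of_isClosed (hpiece n hn) isClosed_Icc isClosed_Icc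
  exact ⟨(hglue N le_rfl).2, hnode⟩
end

section
/- Let V and Q be finite-dimensional real inner product spaces, let a : V × V → ℝ and b : V × Q → ℝ be bilinear forms, let t₀ < t₁ be real numbers with τ := t₁ − t₀ and t̄ := (t₀ + t₁)/2, let F₀, F₁ : V → ℝ be linear functionals, and let u₀ ∈ V. Then for every affine function u : ℝ → V with u(t₀) = u₀ and every affine function p : ℝ → Q, the following two conditions are equivalent: (i) for all v ∈ V, ∫_{t₀}^{t₁} (⟨deriv u t, v⟩ + a(u(t), v) + b(v, p(t))) dt = (τ/2)(F₀(v) + F₁(v)), and for all q ∈ Q, ∫_{t₀}^{t₁} b(u(t), q) dt = 0; (ii) for all v ∈ V, ⟨u(t̄) − u₀, v⟩ + (τ/2)(a(u(t̄), v) + b(v, p(t̄))) = (τ/4)(F₀(v) + F₁(v)), and for all q ∈ Q, b(u(t̄), q) = 0. Moreover, if (u,p) satisfies (i) and p̂ : ℝ → Q is any affine function with p̂(t̄) = p(t̄), then (u, p̂) also satisfies (i). -/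
/-!
An affine real-valued function integrates to the length of the interval times its midpoint value
(the midpoint rule is exact, `integral_affine_midpoint`). All integrands here are affine in time,
since `deriv u` is constant, so the momentum integral equals
`τ * (⟪y, v⟫ + a (u tb) v + b v (p tb))`, with `y` the slope of `u` (`integral_momentum`), and the
constraint integral equals `τ * b (u tb) q` (`integral_constraint`). As `u tb - u t₀ = (τ / 2) • y`,
the two momentum equations differ by the factor `2`, and the two constraints by `τ ≠ 0`.
The pressure enters the integrals only through `p tb`, so its remaining values are free.
-/

open scoped RealInnerProductSpace

open intervalIntegral in
lemma integral_affine_midpoint (t₀ t₁ α β : ℝ) :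
    ∫ s in t₀..t₁, (α + s * β) = (t₁ - t₀) * (α + (t₀ + t₁) / 2 * β) := by
  rw [integral_add (by simp) (by apply Continuous.intervalIntegrable; fun_prop), integral_const,
    integral_mul_const, integral_id, smul_eq_mul]
  ring

lemma integral_momentum {V Q : Type*}
    [NormedAddCommGroup V] [InnerProductSpace ℝ V] [NormedAddCommGroup Q] [InnerProductSpace ℝ Q]
    (a : V →ₗ[ℝ] V →ₗ[ℝ] ℝ) (b : V →ₗ[ℝ] Q →ₗ[ℝ] ℝ) (t₀ t₁ : ℝ)
    {u : ℝ → V} {x y : V} (hu : ∀ s : ℝ, u s = x + s • y)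
    {p : ℝ → Q} (hp : ∃ x y : Q, ∀ s : ℝ, p s = x + s • y) (v : V) :
    ∫ s in t₀..t₁, (⟪deriv u s, v⟫ + a (u s) v + b v (p s))
      = (t₁ - t₀) * (⟪y, v⟫ + a (u ((t₀ + t₁) / 2)) v + b v (p ((t₀ + t₁) / 2))) := by
  obtain ⟨z, w, hp⟩ := hp
  have hderiv (s : ℝ) : deriv u s = y := by
    rw [funext hu]
    simpa using (((hasDerivAt_id s).smul_const y).const_add x).deriv
  have hintegrand (s : ℝ) : ⟪deriv u s, v⟫ + a (u s) v + b v (p s)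
      = (⟪y, v⟫ + a x v + b v z) + s * (a y v + b v w) := by
    simp only [hderiv, hu, hp, map_add, map_smul, LinearMap.add_apply, LinearMap.smul_apply,
      smul_eq_mul]
    ring
  simp only [hintegrand, integral_affine_midpoint]
  simp only [hu, hp, map_add, map_smul, LinearMap.add_apply, LinearMap.smul_apply, smul_eq_mul]
  ring

lemma integral_constraint {V Q : Type*}
    [NormedAddCommGroup V] [InnerProductSpace ℝ V] [NormedAddCommGroup Q] [InnerProductSpace ℝ Q]
    (b : V →ₗ[ℝ] Q →ₗ[ℝ] ℝ) (t₀ t₁ : ℝ)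
    {u : ℝ → V} {x y : V} (hu : ∀ s : ℝ, u s = x + s • y) (q : Q) :
    ∫ s in t₀..t₁, b (u s) q = (t₁ - t₀) * b (u ((t₀ + t₁) / 2)) q := by
  simp only [hu, map_add, map_smul, LinearMap.add_apply, LinearMap.smul_apply, smul_eq_mul,
    integral_affine_midpoint]

/-- Characterization of the solution set of the space-time problem on one time interval:
the space-time variational equations with constant-in-time test functions are equivalent to
the space problem for the midpoint values, and the pressure value at the left endpoint is a
free degree of freedom. -/
theorem space_time_problem_characterization
    {V Q : Type*}
    [NormedAddCommGroup V] [InnerProductSpace ℝ V] [FiniteDimensional ℝ V]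
    [NormedAddCommGroup Q] [InnerProductSpace ℝ Q] [FiniteDimensional ℝ Q]
    (a : V →ₗ[ℝ] V →ₗ[ℝ] ℝ) (b : V →ₗ[ℝ] Q →ₗ[ℝ] ℝ)
    (t₀ t₁ : ℝ) (hlt : t₀ < t₁) (τ tb : ℝ) (hτ : τ = t₁ - t₀) (htb : tb = (t₀ + t₁) / 2)
    (F₀ F₁ : V →ₗ[ℝ] ℝ) (u₀ : V)
    (u : ℝ → V) (hu : ∃ x y : V, ∀ s : ℝ, u s = x + s • y) (hu0 : u t₀ = u₀)
    (p : ℝ → Q) (hp : ∃ x y : Q, ∀ s : ℝ, p s = x + s • y) :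
    (((∀ v : V, (∫ s in t₀..t₁, (⟪deriv u s, v⟫ + a (u s) v + b v (p s)))
          = (τ / 2) * (F₀ v + F₁ v)) ∧
        (∀ q : Q, (∫ s in t₀..t₁, b (u s) q) = 0))
      ↔
      ((∀ v : V, ⟪u tb - u₀, v⟫ + (τ / 2) * (a (u tb) v + b v (p tb))
          = (τ / 4) * (F₀ v + F₁ v)) ∧
        (∀ q : Q, b (u tb) q = 0)))
    ∧
    (((∀ v : V, (∫ s in t₀..t₁, (⟪deriv u s, v⟫ + a (u s) v + b v (p s)))
          = (τ / 2) * (F₀ v + F₁ v)) ∧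
        (∀ q : Q, (∫ s in t₀..t₁, b (u s) q) = 0)) →
      ∀ p' : ℝ → Q, (∃ x y : Q, ∀ s : ℝ, p' s = x + s • y) → p' tb = p tb →
        ((∀ v : V, (∫ s in t₀..t₁, (⟪deriv u s, v⟫ + a (u s) v + b v (p' s)))
            = (τ / 2) * (F₀ v + F₁ v)) ∧
          (∀ q : Q, (∫ s in t₀..t₁, b (u s) q) = 0))) := by
  obtain ⟨x, y, hu⟩ := hu
  subst hτ htb hu0
  have hτ0 : t₁ - t₀ ≠ 0 := sub_ne_zero.mpr hlt.ne'
  have hincr (v : V) : ⟪u ((t₀ + t₁) / 2) - u t₀, v⟫ = (t₁ - t₀) / 2 * ⟪y, v⟫ := by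
    rw [hu, hu, add_sub_add_left_eq_sub, ← sub_smul, real_inner_smul_left]
    ring
  refine ⟨and_congr (forall_congr' fun v => ?_) (forall_congr' fun q => ?_), ?_⟩
  · rw [integral_momentum a b t₀ t₁ hu hp v, hincr]
    constructor <;> intro h <;> linarith
  · rw [integral_constraint b t₀ t₁ hu q, mul_eq_zero, or_iff_right hτ0]
  · rintro ⟨hmom, hcon⟩ p' hp' hmid
    refine ⟨fun v => ?_, hcon⟩
    rw [← hmom v, integral_momentum a b t₀ t₁ hu hp' v, integral_momentum a b t₀ t₁ hu hp v, hmid]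
end

section
/- Let V and Q be finite-dimensional real normed vector spaces, A : V → V and B : Q → V linear maps, and t₀ < t₁ real numbers with τ := t₁ − t₀. Define θ : ℝ → ℝ by θ(t) := −(t − t₀)(t − t₁)/τ. Let u : ℝ → V and p : ℝ → Q be affine functions, let c ∈ V, d ∈ Q, f₀, f₁ ∈ V, and define ũ(t) := u(t) + θ(t) • c and p̃(t) := p(t) + (deriv θ t) • d. Assume: (i) ∫_{t₀}^{t₁} (deriv u t + A (u t) + B (p t)) dt = (τ/2) • (f₀ + f₁); and (ii) the collocation condition at the left endpoint, deriv ũ t₀ + A (ũ t₀) + B (p̃ t₀) = f₀. Then the collocation condition holds at the right endpoint: deriv ũ t₁ + A (ũ t₁) + B (p̃ t₁) = f₁. -/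
/-!
The integrand `g = u' + A u + B p` is affine, so the trapezoidal rule integrates it exactly and
the Galerkin equation reads `g t₀ + g t₁ = f₀ + f₁`. The bubble `θ` vanishes at both endpoints
with slopes `1` and `-1`, so post-processing changes the collocation residual by `c + B d` at
`t₀` and by `-(c + B d)` at `t₁`. The two collocation conditions are therefore
`g t₀ + (c + B d) = f₀` and `g t₁ - (c + B d) = f₁`, whose sum is the Galerkin identity.
-/

/-- The trapezoidal rule is exact for affine functions. -/
lemma integral_affine_eq_trapezoid {V : Type*} [NormedAddCommGroup V] [NormedSpace ℝ V]
    [CompleteSpace V] (a b : V) (t₀ t₁ : ℝ) :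
    (∫ s in t₀..t₁, (a + s • b)) = ((t₁ - t₀) / 2) • ((a + t₀ • b) + (a + t₁ • b)) := by
  rw [intervalIntegral.integral_add (by simp) ((by fun_prop : Continuous
    fun s : ℝ => s • b).intervalIntegrable _ _), intervalIntegral.integral_smul_const]
  simp only [intervalIntegral.integral_const, integral_id]
  module

lemma hasDerivAt_bubble (t₀ t₁ τ s : ℝ) :
    HasDerivAt (fun s : ℝ => -((s - t₀) * (s - t₁)) / τ)
      (-((s - t₁) + (s - t₀)) / τ) s := by
  have h := ((((hasDerivAt_id s).sub_const t₀).mul ((hasDerivAt_id s).sub_const t₁)).neg).div_const τ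
  simpa using h


/-- If the affine pair `(u, p)` satisfies the Galerkin equation with Gauss–Lobatto quadrature
of the right-hand side, and the post-processed pair `(ũ, p̃)` satisfies the collocation
condition at the left endpoint `t₀`, then it satisfies the collocation condition at `t₁`. -/
theorem collocation_condition_right_endpoint
    {V Q : Type*}
    [NormedAddCommGroup V] [NormedSpace ℝ V] [FiniteDimensional ℝ V]
    [NormedAddCommGroup Q] [NormedSpace ℝ Q] [FiniteDimensional ℝ Q]
    (A : V →ₗ[ℝ] V) (B : Q →ₗ[ℝ] V)
    (t₀ t₁ : ℝ) (hlt : t₀ < t₁) (τ : ℝ) (hτ : τ = t₁ - t₀)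
    (θ : ℝ → ℝ) (hθ : ∀ s : ℝ, θ s = -((s - t₀) * (s - t₁)) / τ)
    (u : ℝ → V) (hu : ∃ x y : V, ∀ s : ℝ, u s = x + s • y)
    (p : ℝ → Q) (hp : ∃ x y : Q, ∀ s : ℝ, p s = x + s • y)
    (c : V) (d : Q) (f₀ f₁ : V)
    (ut : ℝ → V) (hut : ∀ s : ℝ, ut s = u s + θ s • c)
    (pt : ℝ → Q) (hpt : ∀ s : ℝ, pt s = p s + deriv θ s • d)
    (hGalerkin : (∫ s in t₀..t₁, (deriv u s + A (u s) + B (p s))) = (τ / 2) • (f₀ + f₁))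
    (hcoll₀ : deriv ut t₀ + A (ut t₀) + B (pt t₀) = f₀) :
    deriv ut t₁ + A (ut t₁) + B (pt t₁) = f₁ := by
  obtain ⟨x, y, hu⟩ := hu
  obtain ⟨z, w, hp⟩ := hp
  obtain rfl : θ = fun s => -((s - t₀) * (s - t₁)) / τ := funext hθ
  have hτ0 : τ ≠ 0 := by rw [hτ]; exact (sub_pos.2 hlt).ne'
  have hdu (s : ℝ) : HasDerivAt u y s := by
    rw [funext hu]
    simpa using ((hasDerivAt_id s).smul_const y).const_add x
  have hdut (s : ℝ) : deriv ut s = y + (-((s - t₁) + (s - t₀)) / τ) • c := by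
    rw [funext hut]
    exact ((hdu s).add ((hasDerivAt_bubble t₀ t₁ τ s).smul_const c)).deriv
  have slope₀ : -((t₀ - t₁) + (t₀ - t₀)) / τ = 1 := by
    rw [div_eq_one_iff_eq hτ0, hτ]; ring
  have slope₁ : -((t₁ - t₁) + (t₁ - t₀)) / τ = -1 := by
    rw [div_eq_iff hτ0, hτ]; ring
  have hg (s : ℝ) : deriv u s + A (u s) + B (p s)
      = (y + A x + B z) + s • (A y + B w) := by
    rw [(hdu s).deriv, hu, hp]
    simp only [map_add, map_smul]
    module
  have : CompleteSpace V := FiniteDimensional.complete ℝ V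
  simp only [hg] at hGalerkin
  rw [integral_affine_eq_trapezoid, ← hτ] at hGalerkin
  have hsum := smul_right_injective V (div_ne_zero hτ0 two_ne_zero) hGalerkin
  rw [hdut, hut, hpt, (hasDerivAt_bubble t₀ t₁ τ t₀).deriv, slope₀, hu, hp] at hcoll₀
  rw [hdut, hut, hpt, (hasDerivAt_bubble t₀ t₁ τ t₁).deriv, slope₁, hu, hp]
  simp only [sub_self, zero_mul, mul_zero, neg_zero, zero_div, zero_smul, add_zero, map_add,
    map_smul, one_smul, neg_smul, map_neg] at hcoll₀ hsum ⊢
  rw [← add_right_inj f₀, ← hsum, ← hcoll₀]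
  module
end

section
/- Let V be a finite-dimensional real inner product space with inner product ⟨·,·⟩ and norm ‖·‖, and let a : V × V → ℝ be a symmetric bilinear form with a(v,v) ≥ 0 for all v ∈ V. Let 0 = t₀ < t₁ < ⋯ < t_N be real numbers with τₘ := tₘ − t_{m−1}, let e₀, …, e_N ∈ V, and let δ₁, …, δ_N ≥ 0. Set dₘ := τₘ⁻¹ • (eₘ − e_{m−1}) and ēₘ := (e_{m−1} + eₘ)/2. Assume that for every m = 1,…,N and every v ∈ V: ⟨dₘ, v⟩ + a(ēₘ, v) ≤ δₘ ‖v‖. Then for every n = 1,…,N: Σ_{m=1}^{n} τₘ ‖dₘ‖² + a(eₙ, eₙ) ≤ a(e₀, e₀) + Σ_{m=1}^{n} τₘ δₘ². -/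
/-!
Testing the residual inequality with `v = dₘ` and using Young's inequality
`δₘ ‖dₘ‖ ≤ (δₘ² + ‖dₘ‖²) / 2` gives `‖dₘ‖² + 2 a(ēₘ, dₘ) ≤ δₘ²`. Since `eₘ - eₘ₋₁ = τₘ dₘ` and `a`
is symmetric, `2 τₘ a(ēₘ, dₘ) = a(eₘ, eₘ) - a(eₘ₋₁, eₘ₋₁)`, so multiplying by `τₘ > 0` yields the
one-step estimate `energy_step`, which telescopes.
-/

open scoped RealInnerProductSpace

/-- The energy estimate on a single time interval of length `τ`, from `x` to `y`. -/
theorem energy_step {V : Type*} [NormedAddCommGroup V] [InnerProductSpace ℝ V]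
    (a : V →ₗ[ℝ] V →ₗ[ℝ] ℝ) (hsymm : ∀ v w : V, a v w = a w v)
    {τ δ : ℝ} (hτ : 0 < τ) {x y d : V} (hd : d = τ⁻¹ • (y - x))
    (hres : ⟪d, d⟫ + a ((2 : ℝ)⁻¹ • (x + y)) d ≤ δ * ‖d‖) :
    τ * ‖d‖ ^ 2 + a y y ≤ a x x + τ * δ ^ 2 := by
  have hmid : 2 * (τ * a ((2 : ℝ)⁻¹ • (x + y)) d) = a y y - a x x := by
    rw [hd]
    simp only [map_add, map_sub, map_smul, LinearMap.add_apply, LinearMap.smul_apply, smul_eq_mul]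
    rw [hsymm x y]
    field_simp
    ring
  rw [real_inner_self_eq_norm_sq] at hres
  have hyoung : ‖d‖ ^ 2 + 2 * a ((2 : ℝ)⁻¹ • (x + y)) d ≤ δ ^ 2 := by
    nlinarith [sq_nonneg (δ - ‖d‖)]
  nlinarith [mul_le_mul_of_nonneg_left hyoung hτ.le]

/-- Abstract energy argument: testing the residual inequality with the discrete time
derivative yields control of the midpoint time derivatives and of the energy norm at the
nodes. -/
theorem discrete_energy_estimate_time_derivative
    {V : Type*} [NormedAddCommGroup V] [InnerProductSpace ℝ V] [FiniteDimensional ℝ V]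
    (a : V →ₗ[ℝ] V →ₗ[ℝ] ℝ) (hsymm : ∀ v w : V, a v w = a w v) (hpos : ∀ v : V, 0 ≤ a v v)
    (N : ℕ) (hN : 1 ≤ N) (t : ℕ → ℝ) (ht0 : t 0 = 0)
    (hmono : ∀ i, i < N → t i < t (i + 1))
    (τ : ℕ → ℝ) (hτ : ∀ m : ℕ, τ m = t m - t (m - 1))
    (e : ℕ → V) (δ : ℕ → ℝ) (hδ : ∀ m : ℕ, 1 ≤ m → m ≤ N → 0 ≤ δ m)
    (d ebar : ℕ → V)
    (hd : ∀ m : ℕ, d m = (τ m)⁻¹ • (e m - e (m - 1)))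
    (hebar : ∀ m : ℕ, ebar m = (2 : ℝ)⁻¹ • (e (m - 1) + e m))
    (hres : ∀ m : ℕ, 1 ≤ m → m ≤ N → ∀ v : V, ⟪d m, v⟫ + a (ebar m) v ≤ δ m * ‖v‖) :
    ∀ n : ℕ, 1 ≤ n → n ≤ N →
      (∑ m ∈ Finset.Icc 1 n, τ m * ‖d m‖ ^ 2) + a (e n) (e n)
        ≤ a (e 0) (e 0) + ∑ m ∈ Finset.Icc 1 n, τ m * δ m ^ 2 := by
  intro n hn hnN
  -- The estimate also holds for `n = 0`, so the induction starts there.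
  clear hn
  induction n with
  | zero => simp
  | succ k ih =>
    have hτpos : 0 < τ (k + 1) := by
      rw [hτ, Nat.add_sub_cancel]
      exact sub_pos.mpr (hmono k hnN)
    have hdk : d (k + 1) = (τ (k + 1))⁻¹ • (e (k + 1) - e k) := hd (k + 1)
    have hr := hres (k + 1) (Nat.le_add_left 1 k) hnN (d (k + 1))
    rw [hebar, Nat.add_sub_cancel] at hr
    have hstep := energy_step a hsymm hτpos hdk hr
    rw [Finset.sum_Icc_succ_top (Nat.le_add_left 1 k), Finset.sum_Icc_succ_top (Nat.le_add_left 1 k)]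
    linarith [ih (Nat.le_of_succ_le hnN)]
end

section
/- Let V and Q be finite-dimensional real inner product spaces, let a : V × V → ℝ be a symmetric bilinear form with a(v,v) ≥ 0 for all v ∈ V, and let b : V × Q → ℝ be a bilinear form. Define ‖v‖₁ := (‖v‖² + a(v,v))^{1/2} for v ∈ V, and assume there is β > 0 such that for every q ∈ Q there exists v ∈ V with v ≠ 0 and b(v, q) ≥ β ‖v‖₁ ‖q‖. Let d, ē ∈ V, ε ∈ Q, and δ ≥ 0 satisfy ⟨d, v⟩ + a(ē, v) + b(v, ε) ≤ δ ‖v‖ for all v ∈ V. Then β ‖ε‖ ≤ δ + ‖d‖ + a(ē, ē)^{1/2}. -/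
/-!
Test the residual inequality with the vector `v` that the inf-sup condition supplies for `ε`. The
Cauchy–Schwarz inequalities for the inner product and for the semidefinite form `a` bound `b v ε`
by `δ ‖v‖ + ‖d‖ ‖v‖ + √(a ebar ebar) √(a v v)`. Both `‖v‖` and `√(a v v)` are at most
`√(‖v‖ ^ 2 + a v v)`, which is positive as `v ≠ 0` and can therefore be cancelled.
-/

open scoped RealInnerProductSpace

/-- Abstract inf-sup argument: the pressure error is bounded, up to the inf-sup constant, by
the residual bound plus the norms of the data. -/
theorem infsup_pressure_bound
    {V Q : Type*}
    [NormedAddCommGroup V] [InnerProductSpace ℝ V] [FiniteDimensional ℝ V]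
    [NormedAddCommGroup Q] [InnerProductSpace ℝ Q] [FiniteDimensional ℝ Q]
    (a : V →ₗ[ℝ] V →ₗ[ℝ] ℝ) (hsymm : ∀ v w : V, a v w = a w v) (hpos : ∀ v : V, 0 ≤ a v v)
    (b : V →ₗ[ℝ] Q →ₗ[ℝ] ℝ) (β : ℝ) (hβ : 0 < β)
    (hinfsup : ∀ q : Q, ∃ v : V, v ≠ 0 ∧
      β * Real.sqrt (‖v‖ ^ 2 + a v v) * ‖q‖ ≤ b v q)
    (d ebar : V) (ε : Q) (δ : ℝ) (hδ : 0 ≤ δ)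
    (hres : ∀ v : V, ⟪d, v⟫ + a ebar v + b v ε ≤ δ * ‖v‖) :
    β * ‖ε‖ ≤ δ + ‖d‖ + Real.sqrt (a ebar ebar) := by
  obtain ⟨v, hv, hb⟩ := hinfsup ε
  set N := Real.sqrt (‖v‖ ^ 2 + a v v) with hN
  have hvN : ‖v‖ ≤ N := Real.le_sqrt_of_sq_le (by linarith [hpos v])
  have haN : Real.sqrt (a v v) ≤ N := Real.sqrt_le_sqrt (by linarith [sq_nonneg ‖v‖])
  have hNpos : 0 < N := (norm_pos_iff.mpr hv).trans_le hvN
  have hd : -⟪d, v⟫ ≤ ‖d‖ * ‖v‖ := (neg_le_abs _).trans (abs_real_inner_le_norm d v)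
  have ha : -a ebar v ≤ Real.sqrt (a ebar ebar) * Real.sqrt (a v v) := by
    rw [← Real.sqrt_mul (hpos ebar)]
    refine (neg_le_abs _).trans (Real.abs_le_sqrt ?_)
    have h := LinearMap.BilinForm.apply_mul_apply_le_of_forall_zero_le a hpos ebar v
    rwa [hsymm v ebar, ← sq] at h
  refine le_of_mul_le_mul_right ?_ hNpos
  calc β * ‖ε‖ * N = β * N * ‖ε‖ := by ring
    _ ≤ δ * ‖v‖ + ‖d‖ * ‖v‖ + Real.sqrt (a ebar ebar) * Real.sqrt (a v v) := by
        linarith [hres v]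
    _ ≤ δ * N + ‖d‖ * N + Real.sqrt (a ebar ebar) * N := by gcongr
    _ = (δ + ‖d‖ + Real.sqrt (a ebar ebar)) * N := by ring
end

section
/- Let E be a real normed vector space, let x, y ∈ E, and let g : ℝ → E be the affine function g(t) = x + t • y. Then for all real a < b: ∫_a^b ‖g(t)‖² dt ≤ 8 (b − a) (‖g((a + b)/2)‖² + ‖g(b)‖²). -/
/-!
The bound holds pointwise. With `m = (a + b) / 2` and `s = (t - m) / (b - m)`, affinity gives
`g t = (1 - s) • g m + s • g b`, and `t ∈ [a, b]` means `s ∈ [-1, 1]`. Hence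
`‖g t‖ ≤ 2 ‖g m‖ + ‖g b‖`, so `‖g t‖ ^ 2 ≤ 5 (‖g m‖ ^ 2 + ‖g b‖ ^ 2)` by Cauchy-Schwarz, and
integrating over an interval of length `b - a` gives the claim, even with `5` in place of `8`.
-/

/-- Norm equivalence for affine functions: the squared `L²` norm over `[a, b]` is controlled
by the squared values at the midpoint and at the right endpoint. -/
theorem affine_L2_norm_bound_by_midpoint_and_endpoint
    {E : Type*} [NormedAddCommGroup E] [NormedSpace ℝ E]
    (x y : E) (g : ℝ → E) (hg : ∀ t : ℝ, g t = x + t • y)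
    (a b : ℝ) (hab : a < b) :
    (∫ t in a..b, ‖g t‖ ^ 2) ≤ 8 * (b - a) * (‖g ((a + b) / 2)‖ ^ 2 + ‖g b‖ ^ 2) := by
  have hcont : Continuous fun t => ‖g t‖ ^ 2 := by
    rw [funext hg]
    fun_prop
  have hpt : ∀ t ∈ Set.Icc a b,
      ‖g t‖ ^ 2 ≤ 8 * (‖g ((a + b) / 2)‖ ^ 2 + ‖g b‖ ^ 2) := by
    rintro t ⟨hat, htb⟩
    have hba : 0 < b - a := sub_pos.mpr hab
    obtain ⟨s, hs⟩ : ∃ s : ℝ, s * (b - a) = 2 * t - a - b :=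
      ⟨(2 * t - a - b) / (b - a), div_mul_cancel₀ _ hba.ne'⟩
    have hs1 : s ≤ 1 := by nlinarith
    have hs2 : -1 ≤ s := by nlinarith
    have hgt : g t = (1 - s) • g ((a + b) / 2) + s • g b := by
      have ht : t = (1 - s) * ((a + b) / 2) + s * b := by linarith
      simp only [hg]
      rw [congrArg (· • y) ht]
      module
    have hnorm : ‖g t‖ ≤ 2 * ‖g ((a + b) / 2)‖ + ‖g b‖ := by
      rw [hgt]
      refine (norm_add_le _ _).trans ?_
      rw [norm_smul, norm_smul, Real.norm_eq_abs, Real.norm_eq_abs]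
      have h1 : |1 - s| ≤ 2 := abs_le.mpr ⟨by linarith, by linarith⟩
      have h2 : |s| ≤ 1 := abs_le.mpr ⟨hs2, hs1⟩
      nlinarith [norm_nonneg (g ((a + b) / 2)), norm_nonneg (g b)]
    have hsq := pow_le_pow_left₀ (norm_nonneg (g t)) hnorm 2
    nlinarith [sq_nonneg (‖g ((a + b) / 2)‖ - 2 * ‖g b‖),
      sq_nonneg ‖g ((a + b) / 2)‖, sq_nonneg ‖g b‖]
  calc (∫ t in a..b, ‖g t‖ ^ 2)
      ≤ ∫ _ in a..b, 8 * (‖g ((a + b) / 2)‖ ^ 2 + ‖g b‖ ^ 2) :=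
        intervalIntegral.integral_mono_on hab.le (hcont.intervalIntegrable a b)
          intervalIntegrable_const hpt
    _ = 8 * (b - a) * (‖g ((a + b) / 2)‖ ^ 2 + ‖g b‖ ^ 2) := by
        rw [intervalIntegral.integral_const, smul_eq_mul]
        ring
end

section
/- Let E be a real normed vector space, let x, y ∈ E, and let g : ℝ → E be the affine function g(t) = x + t • y. Let s₁ < s₂ be real numbers and K ≥ 0. Then for every t with s₁ − K(s₂ − s₁) ≤ t ≤ s₂ + K(s₂ − s₁): ‖g(t)‖ ≤ (1 + K) (‖g(s₁)‖ + ‖g(s₂)‖). -/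
/-!
An affine function is recovered from its values at two nodes by Lagrange interpolation:
`g t = (1 - c) • g s₁ + c • g s₂` with `c = (t - s₁) / (s₂ - s₁)`. The range of `t` bounds both
weights by `1 + K` in absolute value, and the triangle inequality concludes.
-/

/-- Stability of linear interpolation/extrapolation: the value of an affine function at any
point whose distance to the nodes `s₁ < s₂` is at most `K` times the node separation is
controlled by the values at the nodes. -/
theorem affine_interpolation_extrapolation_stability
    {E : Type*} [NormedAddCommGroup E] [NormedSpace ℝ E]
    (x y : E) (g : ℝ → E) (hg : ∀ t : ℝ, g t = x + t • y)
    (s₁ s₂ : ℝ) (hs : s₁ < s₂) (K : ℝ) (hK : 0 ≤ K) :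
    ∀ t : ℝ, s₁ - K * (s₂ - s₁) ≤ t → t ≤ s₂ + K * (s₂ - s₁) →
      ‖g t‖ ≤ (1 + K) * (‖g s₁‖ + ‖g s₂‖) := by
  intro t ht₁ ht₂
  have hd : 0 < s₂ - s₁ := sub_pos.mpr hs
  -- The barycentric coordinate `c` of `t` lies in `[-K, 1 + K]`, an interval symmetric
  -- under `c ↦ 1 - c`, so both Lagrange weights are at most `1 + K` in absolute value.
  obtain ⟨c, hc⟩ : ∃ c : ℝ, t = s₁ + c * (s₂ - s₁) :=
    ⟨(t - s₁) / (s₂ - s₁), by rw [div_mul_cancel₀ _ hd.ne']; ring⟩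
  have hc₁ : -K ≤ c := le_of_mul_le_mul_right (by linarith) hd
  have hc₂ : c ≤ 1 + K := le_of_mul_le_mul_right (by linarith) hd
  have hgt : g t = (1 - c) • g s₁ + c • g s₂ := by
    rw [hg, hg, hg, hc]
    module
  calc ‖g t‖ ≤ ‖(1 - c) • g s₁‖ + ‖c • g s₂‖ := hgt ▸ norm_add_le _ _
    _ = |1 - c| * ‖g s₁‖ + |c| * ‖g s₂‖ := by simp only [norm_smul, Real.norm_eq_abs]
    _ ≤ (1 + K) * ‖g s₁‖ + (1 + K) * ‖g s₂‖ := by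
      gcongr <;> exact abs_le.mpr ⟨by linarith, by linarith⟩
    _ = (1 + K) * (‖g s₁‖ + ‖g s₂‖) := by ring
end

section
/- Let E be a real Banach space, let α < β be real numbers, and let q : ℝ → E be twice continuously differentiable on [α,β] with ‖q''(t)‖ ≤ M for all t ∈ [α,β]. Let s₁ < s₂ be two points of [α,β] and let L : ℝ → E be the affine interpolant of q at s₁ and s₂, L(t) = q(s₁) + ((t − s₁)/(s₂ − s₁)) • (q(s₂) − q(s₁)). Then for every t ∈ [α,β]: ‖q(t) − L(t)‖ ≤ (M/2) (β − α)². -/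
/-!
Write `q[a, b] = (b - a)⁻¹ • (q b - q a)` for the divided difference. The interpolation error is
`q t - L t = (t - s₁) • (q[s₁, t] - q[s₁, s₂])`. Formally
`q[s₁, x] = ∫ u in 0..1, q' (s₁ + u (x - s₁))`, and `q'` is `M`-Lipschitz, so the two divided
differences differ by at most `∫ u in 0..1, M u |t - s₂| = (M / 2) |t - s₂|`. The integral is
avoided by applying the mean value inequality to
`F u = (t - s₁)⁻¹ • q (s₁ + u (t - s₁)) - (s₂ - s₁)⁻¹ • q (s₁ + u (s₂ - s₁))` on `[0, 1]`.
The error is then at most `(M / 2) |t - s₁| |t - s₂|`, and both factors are at most `hi - lo`.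
-/

/-- Divided differences of a function with `M`-Lipschitz derivative are `M / 2`-Lipschitz in one
of their nodes. -/
lemma norm_dividedDifference_sub_le {E : Type*} [NormedAddCommGroup E] [NormedSpace ℝ E]
    {I : Set ℝ} (hI : Convex ℝ I) {q q' : ℝ → E} {M : ℝ}
    (hq : ∀ x ∈ I, HasDerivWithinAt q (q' x) I x)
    (hq' : ∀ x ∈ I, ∀ y ∈ I, ‖q' y - q' x‖ ≤ M * ‖y - x‖)
    {a s t : ℝ} (ha : a ∈ I) (hs : s ∈ I) (ht : t ∈ I) (has : s ≠ a) (hat : t ≠ a) :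
    ‖(t - a)⁻¹ • (q t - q a) - (s - a)⁻¹ • (q s - q a)‖ ≤ M / 2 * |t - s| := by
  have hmem : ∀ x ∈ I, ∀ u ∈ Set.Icc (0 : ℝ) 1, a + u * (x - a) ∈ I := fun x hx u hu => by
    simpa using hI.add_smul_sub_mem ha hx hu
  have hd : ∀ x ∈ I, x ≠ a → ∀ u ∈ Set.Icc (0 : ℝ) 1,
      HasDerivWithinAt (fun u => (x - a)⁻¹ • (q (a + u * (x - a)) - q a))
        (q' (a + u * (x - a))) (Set.Icc 0 1) u := by
    intro x hx hxa u hu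
    have h1 : HasDerivWithinAt (fun u : ℝ => a + u * (x - a)) (x - a) (Set.Icc 0 1) u := by
      simpa using (((hasDerivAt_id u).mul_const (x - a)).const_add a).hasDerivWithinAt
    have h2 := (((hq _ (hmem x hx u hu)).scomp u h1 (hmem x hx)).sub_const (q a)).const_smul
      (x - a)⁻¹
    rw [smul_smul, inv_mul_cancel₀ (sub_ne_zero.2 hxa), one_smul] at h2
    exact h2
  have hF := fun u hu => (hd t ht hat u hu).sub (hd s hs has u hu)
  have key := image_norm_le_of_norm_deriv_right_le_deriv_boundary
    (B := fun u => M / 2 * |t - s| * u ^ 2) (B' := fun u => M * (u * |t - s|))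
    (fun u hu => (hF u hu).continuousWithinAt)
    (fun u hu => (hF u (Set.Ico_subset_Icc_self hu)).mono_of_mem_nhdsWithin
      (Icc_mem_nhdsGE_of_mem hu))
    (by simp)
    (fun u => by
      refine ((hasDerivAt_pow 2 u).const_mul (M / 2 * |t - s|)).congr_deriv ?_
      push_cast
      ring)
    (fun u hu => by
      have hu' := Set.Ico_subset_Icc_self hu
      refine (hq' _ (hmem s hs u hu') _ (hmem t ht u hu')).trans_eq ?_
      rw [show a + u * (t - a) - (a + u * (s - a)) = u * (t - s) by ring, Real.norm_eq_abs,
        abs_mul, abs_of_nonneg hu.1])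
    (Set.right_mem_Icc.2 zero_le_one)
  simpa using key

/-- Second-order bound for the linear interpolation/extrapolation error on an interval
containing the two interpolation nodes. -/
theorem linear_interpolation_extrapolation_error_bound
    {E : Type*} [NormedAddCommGroup E] [NormedSpace ℝ E] [CompleteSpace E]
    (lo hi : ℝ) (hlohi : lo < hi) (q : ℝ → E) (M : ℝ)
    (hq : ContDiffOn ℝ 2 q (Set.Icc lo hi))
    (hM : ∀ t ∈ Set.Icc lo hi, ‖iteratedDerivWithin 2 q (Set.Icc lo hi) t‖ ≤ M)
    (s₁ s₂ : ℝ) (hs : s₁ < s₂) (hs₁ : s₁ ∈ Set.Icc lo hi) (hs₂ : s₂ ∈ Set.Icc lo hi)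
    (L : ℝ → E) (hL : ∀ t : ℝ, L t = q s₁ + ((t - s₁) / (s₂ - s₁)) • (q s₂ - q s₁)) :
    ∀ t ∈ Set.Icc lo hi, ‖q t - L t‖ ≤ (M / 2) * (hi - lo) ^ 2 := by
  intro t ht
  have hM0 : 0 ≤ M := (norm_nonneg _).trans (hM t ht)
  rcases eq_or_ne t s₁ with rfl | hne
  · rw [hL]
    simp
    positivity
  have hU := uniqueDiffOn_Icc hlohi
  have hd : ∀ x ∈ Set.Icc lo hi,
      HasDerivWithinAt q (iteratedDerivWithin 1 q (Set.Icc lo hi) x) (Set.Icc lo hi) x := by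
    intro x hx
    rw [iteratedDerivWithin_one]
    exact (hq.differentiableOn (by norm_num) x hx).hasDerivWithinAt
  have hlip : ∀ x ∈ Set.Icc lo hi, ∀ y ∈ Set.Icc lo hi,
      ‖iteratedDerivWithin 1 q (Set.Icc lo hi) y - iteratedDerivWithin 1 q (Set.Icc lo hi) x‖
        ≤ M * ‖y - x‖ := fun x hx y hy =>
    (convex_Icc lo hi).norm_image_sub_le_of_norm_derivWithin_le
      (hq.differentiableOn_iteratedDerivWithin (by norm_num) hU)
      (fun z hz => by simpa only [iteratedDerivWithin_succ] using hM z hz) hx hy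
  have key := norm_dividedDifference_sub_le (convex_Icc lo hi) hd hlip hs₁ hs₂ ht hs.ne' hne
  have herr : q t - L t = (t - s₁) •
      ((t - s₁)⁻¹ • (q t - q s₁) - (s₂ - s₁)⁻¹ • (q s₂ - q s₁)) := by
    rw [hL, smul_sub (t - s₁), smul_smul, smul_smul, mul_inv_cancel₀ (sub_ne_zero.2 hne), one_smul,
      div_eq_mul_inv]
    abel
  have h1 : |t - s₁| ≤ hi - lo := abs_sub_le_of_le_of_le ht.1 ht.2 hs₁.1 hs₁.2
  have h2 : |t - s₂| ≤ hi - lo := abs_sub_le_of_le_of_le ht.1 ht.2 hs₂.1 hs₂.2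
  calc ‖q t - L t‖ ≤ |t - s₁| * (M / 2 * |t - s₂|) := by
        rw [herr, norm_smul, Real.norm_eq_abs]
        gcongr
    _ ≤ (hi - lo) * (M / 2 * (hi - lo)) := by gcongr
    _ = M / 2 * (hi - lo) ^ 2 := by ring
end

section
/- Let E be a real normed vector space, let N ≥ 2, and let 0 = t₀ < t₁ < ⋯ < t_N be real numbers with τₘ := tₘ − t_{m−1} and t̄ₘ := (t_{m−1} + tₘ)/2. Let c₁, c₂ > 0 and assume τ₁ ≤ c₁ τ₂ and τₘ ≤ c₂ τ_{m−1} for all m = 2,…,N. Then there exists a constant C > 0, depending only on c₁ and c₂ (and not on N, the mesh, E, or the values), such that for all q₁, …, q_N ∈ E: Σ_{m=1}^N τₘ ‖Jₘ‖² ≤ C Σ_{m=1}^N τₘ ‖qₘ‖², where Jₘ := q_{m−1} + ((tₘ − t̄_{m−1})/(t̄ₘ − t̄_{m−1})) • (qₘ − q_{m−1}) for m = 2,…,N and J₁ := q₁ + ((t₁ − t̄₁)/(t̄₂ − t̄₁)) • (q₂ − q₁). -/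
/-!
Each nodal value is an affine combination `(1 - s) q_{m-1} + s q_m` of two neighbouring midpoint
values, where `s = (2 τ_m + τ_{m-1}) / (τ_m + τ_{m-1}) ∈ [1, 2]` for `m ≥ 2`, and
`s = τ₁ / (τ₁ + τ₂) ∈ [0, 1]` for the extrapolated value at `t₁`. Hence the weights are bounded
independently of the mesh, so `‖J_m‖² ≤ 2 ‖q_{m-1}‖² + 8 ‖q_m‖²`
(`norm_sq_affine_comb_le`), and the step ratio bounds replace the weight `τ_m` of a neighbouring
value by that value's own weight. Every midpoint value then occurs in a bounded number of terms,
and summing (`sum_le_of_neighbor_le`) gives the constant `C = 10 + 2 c₁ + 2 c₂`.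
-/

theorem norm_sq_affine_comb_le {E : Type*} [NormedAddCommGroup E] [NormedSpace ℝ E]
    (x y : E) {s α β : ℝ} (hα : |1 - s| ≤ α) (hβ : |s| ≤ β) :
    ‖x + s • (y - x)‖ ^ 2 ≤ 2 * α ^ 2 * ‖x‖ ^ 2 + 2 * β ^ 2 * ‖y‖ ^ 2 := by
  have h1 : x + s • (y - x) = (1 - s) • x + s • y := by module
  have h2 : ‖x + s • (y - x)‖ ≤ α * ‖x‖ + β * ‖y‖ := by
    rw [h1]
    refine (norm_add_le _ _).trans ?_
    rw [norm_smul, norm_smul, Real.norm_eq_abs, Real.norm_eq_abs]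
    gcongr
  have h3 := pow_le_pow_left₀ (norm_nonneg _) h2 2
  nlinarith [sq_nonneg (α * ‖x‖ - β * ‖y‖)]

/-- Summation of a bound on `g (m + 1)` by the neighbouring terms `f m` and `f (m + 1)`. The
subtracted term `A * f (n + 1)` is the contribution of `f (n + 1)` as a left neighbour, which is
used only at the next index; it makes the induction close. -/
theorem sum_le_of_neighbor_le (f g : ℕ → ℝ) {A B : ℝ} (hB : 0 ≤ B) (hf : 0 ≤ f 1) (n : ℕ)
    (h : ∀ m, 1 ≤ m → m ≤ n → g (m + 1) ≤ A * f m + B * f (m + 1)) :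
    ∑ m ∈ Finset.Icc 1 (n + 1), g m ≤
      g 1 + (A + B) * ∑ m ∈ Finset.Icc 1 (n + 1), f m - A * f (n + 1) := by
  induction n with
  | zero =>
    simp only [zero_add, Finset.Icc_self, Finset.sum_singleton]
    nlinarith [mul_nonneg hB hf]
  | succ n ih =>
    have h1 := ih fun m hm hmn => h m hm (by omega)
    have h2 := h (n + 1) (by omega) le_rfl
    rw [Finset.sum_Icc_succ_top (by omega), Finset.sum_Icc_succ_top (by omega) f]
    linarith


/-- Discrete stability estimate for the pressure post-processing by interpolation: the
weighted discrete `ℓ²` norm of the interpolated/extrapolated nodal values is controlled by the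
weighted discrete `ℓ²` norm of the midpoint values, with a constant depending only on the
mesh-ratio bounds `c₁, c₂`. -/
theorem interpolated_nodal_values_discrete_stability
    (c₁ c₂ : ℝ) (hc₁ : 0 < c₁) (hc₂ : 0 < c₂) :
    ∃ C > (0 : ℝ), ∀ (E : Type*) [NormedAddCommGroup E] [NormedSpace ℝ E],
      ∀ (N : ℕ), 2 ≤ N → ∀ (t : ℕ → ℝ), t 0 = 0 → (∀ i, i < N → t i < t (i + 1)) →
      ∀ (τ tb : ℕ → ℝ), (∀ m : ℕ, τ m = t m - t (m - 1)) →
      (∀ m : ℕ, tb m = (t (m - 1) + t m) / 2) →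
      τ 1 ≤ c₁ * τ 2 → (∀ m : ℕ, 2 ≤ m → m ≤ N → τ m ≤ c₂ * τ (m - 1)) →
      ∀ (q J : ℕ → E),
        J 1 = q 1 + ((t 1 - tb 1) / (tb 2 - tb 1)) • (q 2 - q 1) →
        (∀ m : ℕ, 2 ≤ m → m ≤ N →
          J m = q (m - 1) + ((t m - tb (m - 1)) / (tb m - tb (m - 1))) • (q m - q (m - 1))) →
        (∑ m ∈ Finset.Icc 1 N, τ m * ‖J m‖ ^ 2)
          ≤ C * ∑ m ∈ Finset.Icc 1 N, τ m * ‖q m‖ ^ 2 := by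
  refine ⟨10 + 2 * c₁ + 2 * c₂, by positivity, ?_⟩
  intro E _ _ N hN t _ ht τ tb hτ htb hτ1 hτ2 q J hJ1 hJ
  have hpos : ∀ m, 1 ≤ m → m ≤ N → 0 < τ m := by
    intro m hm hmN
    obtain ⟨k, rfl⟩ := Nat.exists_eq_add_of_le' hm
    rw [hτ, Nat.add_sub_cancel]
    exact sub_pos.mpr (ht k (by omega))
  set f : ℕ → ℝ := fun m => τ m * ‖q m‖ ^ 2 with hf
  have hf0 : ∀ m ∈ Finset.Icc 1 N, 0 ≤ f m := by
    intro m hm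
    rw [Finset.mem_Icc] at hm
    exact mul_nonneg (hpos m hm.1 hm.2).le (sq_nonneg _)
  have hfS : ∀ m ∈ Finset.Icc 1 N, f m ≤ ∑ m ∈ Finset.Icc 1 N, f m :=
    fun m hm => Finset.single_le_sum hf0 hm
  have hm1 : 1 ∈ Finset.Icc 1 N := Finset.mem_Icc.mpr ⟨le_rfl, by omega⟩
  have hm2 : 2 ∈ Finset.Icc 1 N := Finset.mem_Icc.mpr ⟨by omega, hN⟩
  have hfirst : τ 1 * ‖J 1‖ ^ 2 ≤ 2 * f 1 + 2 * c₁ * f 2 := by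
    have p1 := hpos 1 le_rfl (by omega)
    have p2 := hpos 2 (by omega) hN
    have hs : (t 1 - tb 1) / (tb 2 - tb 1) = τ 1 / (τ 1 + τ 2) := by
      have e1 : t 1 - tb 1 = τ 1 / 2 := by rw [htb, hτ]; ring
      have e2 : tb 2 - tb 1 = (τ 1 + τ 2) / 2 := by
        rw [htb, htb, hτ, hτ]; norm_num; ring
      rw [e1, e2, div_div_div_cancel_right₀ two_ne_zero]
    have s0 : 0 ≤ τ 1 / (τ 1 + τ 2) := by positivity
    have s1 : τ 1 / (τ 1 + τ 2) ≤ 1 := by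
      rw [div_le_one (by linarith)]; linarith
    have hb := norm_sq_affine_comb_le (q 1) (q 2) (s := τ 1 / (τ 1 + τ 2)) (α := 1) (β := 1)
      (abs_le.mpr ⟨by linarith, by linarith⟩) (abs_le.mpr ⟨by linarith, s1⟩)
    rw [← hs, ← hJ1] at hb
    have h1 := mul_le_mul_of_nonneg_left hb p1.le
    have h2 := mul_le_mul_of_nonneg_right hτ1 (sq_nonneg ‖q 2‖)
    simp only [hf]
    linarith
  have hstep : ∀ m, 1 ≤ m → m ≤ N - 1 →
      τ (m + 1) * ‖J (m + 1)‖ ^ 2 ≤ 2 * c₂ * f m + 8 * f (m + 1) := by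
    intro m hm hmN
    have p1 := hpos m hm (by omega)
    have p2 := hpos (m + 1) (by omega) (by omega)
    have hJm := hJ (m + 1) (by omega) (by omega)
    have hr := hτ2 (m + 1) (by omega) (by omega)
    rw [Nat.add_sub_cancel] at hJm hr
    have hs : (t (m + 1) - tb m) / (tb (m + 1) - tb m)
        = (2 * τ (m + 1) + τ m) / (τ (m + 1) + τ m) := by
      have e1 : t (m + 1) - tb m = (2 * τ (m + 1) + τ m) / 2 := by
        rw [htb, hτ, hτ, Nat.add_sub_cancel]; ring
      have e2 : tb (m + 1) - tb m = (τ (m + 1) + τ m) / 2 := by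
        rw [htb, htb, hτ, hτ, Nat.add_sub_cancel]; ring
      rw [e1, e2, div_div_div_cancel_right₀ two_ne_zero]
    have s1 : 1 ≤ (2 * τ (m + 1) + τ m) / (τ (m + 1) + τ m) := by
      rw [one_le_div (by linarith)]; linarith
    have s2 : (2 * τ (m + 1) + τ m) / (τ (m + 1) + τ m) ≤ 2 := by
      rw [div_le_iff₀ (by linarith)]; linarith
    have hb := norm_sq_affine_comb_le (q m) (q (m + 1))
      (s := (2 * τ (m + 1) + τ m) / (τ (m + 1) + τ m)) (α := 1) (β := 2)
      (abs_le.mpr ⟨by linarith, by linarith⟩) (abs_le.mpr ⟨by linarith, s2⟩)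
    rw [← hs, ← hJm] at hb
    have h1 := mul_le_mul_of_nonneg_left hb p2.le
    have h2 := mul_le_mul_of_nonneg_right hr (sq_nonneg ‖q m‖)
    simp only [hf]
    linarith
  have hsum := sum_le_of_neighbor_le f (fun m => τ m * ‖J m‖ ^ 2) (by norm_num) (hf0 1 hm1)
    (N - 1) hstep
  rw [Nat.sub_add_cancel (by omega : 1 ≤ N)] at hsum
  have hN0 : 0 ≤ 2 * c₂ * f N :=
    mul_nonneg (by positivity) (hf0 N (Finset.mem_Icc.mpr ⟨by omega, le_rfl⟩))
  have h1 := hfS 1 hm1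
  have h2 := mul_le_mul_of_nonneg_left (hfS 2 hm2) hc₁.le
  linarith
end
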